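/- Let γ ∈ (−2, 0). There is a constant C > 0 (depending only on γ) such that for all continuously differentiable functions f, g : ℝ³ → ℝ, the quantity R := ∫_{ℝ³}∫_{ℝ³} |v−v*|^γ |f(v*)|² |g(v)|² dv dv* satisfies each of the four bounds: R ≤ C ‖f‖²_{H¹_{γ/2}} ‖g‖²_{L²_2}, R ≤ C ‖f‖²_{L²_{γ/2}} ‖g‖²_{H¹_2}, R ≤ C ‖f‖²_{H¹_2} ‖g‖²_{L²_{γ/2}}, and R ≤ C ‖f‖²_{L²_2} ‖g‖²_{H¹_{γ/2}} (inequalities in [0,∞]). -/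

import Mathlib

/-! Every bound reduces to an estimate of the Riesz-type potential
`v ↦ ∫ |v - w| ^ γ u(w)² dw` by a weighted Sobolev norm of `u`.

* Away from the singularity (`|v - w| ≥ 1`), and for the comparison of weights near it
  (`|v - w| < 2`), Peetre-type inequalities `⟨v⟩ ≤ 4 ⟨w⟩ |v - w|` and `⟨v⟩ ≤ 4 ⟨w⟩` give
  kernel bounds by `16 ⟨v⟩ ^ γ ⟨w⟩ ^ 4` and, by symmetry, by `16 ⟨w⟩ ^ γ ⟨v⟩ ^ 4`
  (`rpow_le_weight`, `jap_le_near`, `jap_le_far`).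
* Near the singularity a local Hardy inequality is used (`hardy_local`):
  `∫_{|z|<1} |z| ^ γ h² ≤ 12 ∫_{|z|<2} (h² + |∇h|²)`.
  It is proved by dilation. Writing `h(z) = h(2z) - ∫_1^2 ∇h(tz)·z dt`, one has
  `h(z)² ≤ (3/2) h(2z)² + 3 |z|² ∫_1^2 |∇h(tz)|² dt`. Integrating against `|z| ^ γ`, the change
  of variables `y = 2z` gives the first term the factor `(3/2) 2 ^ (-3-γ) ≤ 3/4`, so that its part
  over the unit ball can be absorbed, while `|z| ^ (γ + 2) ≤ 1` removes the weight in the second.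
  To absorb only finite quantities, the ball of radius `δ` is first removed and then `δ → 0`.

The two bounds with the Sobolev norm on `f` follow by integrating the potential estimate in `v`
against `g²`; the other two follow by exchanging the roles of `f` and `g` with Tonelli's theorem.
-/

open MeasureTheory Real
open scoped ENNReal RealInnerProductSpace Classical

noncomputable section

/-- velocity space ℝ³ -/
abbrev E3 : Type := EuclideanSpace ℝ (Fin 3)

/-- the unit sphere 𝕊² ⊆ ℝ³ -/
abbrev S2 : Type := Metric.sphere (0 : E3) 1

/-- surface measure on the unit sphere -/
noncomputable instance : MeasureSpace S2 := ⟨(volume : Measure E3).toSphere⟩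

/-- Japanese bracket ⟨v⟩ = √(1+|v|²). -/
def jap (v : E3) : ℝ := Real.sqrt (1 + ‖v‖ ^ 2)

/-- Post-collision velocity v' = (v+v*)/2 + (|v-v*|/2)σ. -/
def vP (v w : E3) (σ : S2) : E3 := (2⁻¹ : ℝ) • (v + w) + (‖v - w‖ / 2) • (σ : E3)

/-- Post-collision velocity v*' = (v+v*)/2 - (|v-v*|/2)σ. -/
def vsP (v w : E3) (σ : S2) : E3 := (2⁻¹ : ℝ) • (v + w) - (‖v - w‖ / 2) • (σ : E3)

/-- cos θ = ((v-v*)/|v-v*|)·σ. -/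
def cosTheta (v w : E3) (σ : S2) : ℝ := ⟪v - w, (σ : E3)⟫ / ‖v - w‖

/-- sin(θ/2) = √((1-cos θ)/2). -/
def sinHalf (v w : E3) (σ : S2) : ℝ := Real.sqrt ((1 - cosTheta v w σ) / 2)

/-- cos(θ/2) = √((1+cos θ)/2). -/
def cosHalf (v w : E3) (σ : S2) : ℝ := Real.sqrt ((1 + cosTheta v w σ) / 2)

/-- a fixed reference unit direction, used to express rotation-invariant angular integrals -/
def e1 : E3 := EuclideanSpace.single 0 1

/-- cos θ for the deviation angle of σ relative to the fixed direction `e1` -/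
def cos1 (σ : S2) : ℝ := ⟪e1, (σ : E3)⟫

def sinHalf1 (σ : S2) : ℝ := Real.sqrt ((1 - cos1 σ) / 2)

def cosHalf1 (σ : S2) : ℝ := Real.sqrt ((1 + cos1 σ) / 2)

/-- the standard Maxwellian μ(v) = (2π)^{-3/2} e^{-|v|²/2} -/
def maxw (v : E3) : ℝ := (2 * π) ^ (-(3 : ℝ) / 2) * Real.exp (-‖v‖ ^ 2 / 2)

/-- Grad's angular cutoff assumption (A2): `bf` is measurable, nonnegative,
`K ≤ bf ≤ K⁻¹` on `[0,1]` for some `K > 0`, and `bf` vanishes on negatives. -/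
def gradCutoff (bf : ℝ → ℝ) : Prop :=
  Measurable bf ∧ (∀ t, 0 ≤ bf t) ∧
    (∃ K : ℝ, 0 < K ∧ ∀ t ∈ Set.Icc (0 : ℝ) 1, K ≤ bf t ∧ bf t ≤ K⁻¹) ∧
    ∀ t : ℝ, t < 0 → bf t = 0

/-- gain operator Q⁺ -/
def Qgain (γ : ℝ) (bf : ℝ → ℝ) (f g : E3 → ℝ) (v : E3) : ℝ :=
  ∫ w : E3, ∫ σ : S2, ‖v - w‖ ^ γ * bf (cosTheta v w σ) * (f (vsP v w σ) * g (vP v w σ))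

/-- loss operator Q⁻ -/
def Qloss (γ : ℝ) (bf : ℝ → ℝ) (f g : E3 → ℝ) (v : E3) : ℝ :=
  ∫ w : E3, ∫ σ : S2, ‖v - w‖ ^ γ * bf (cosTheta v w σ) * (f w * g v)

/-- the Boltzmann collision operator Q = Q⁺ - Q⁻ -/
def Qcol (γ : ℝ) (bf : ℝ → ℝ) (f g : E3 → ℝ) (v : E3) : ℝ :=
  ∫ w : E3, ∫ σ : S2, ‖v - w‖ ^ γ * bf (cosTheta v w σ) *
    (f (vsP v w σ) * g (vP v w σ) - f w * g v)

/-- collision frequency ν(v) -/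
def nuF (γ : ℝ) (bf : ℝ → ℝ) (v : E3) : ℝ :=
  ∫ w : E3, ∫ σ : S2, ‖v - w‖ ^ γ * bf (cosTheta v w σ) * maxw w

/-- squared weighted norm ‖f‖²_{L²_q} -/
def wSqR (q : ℝ) (f : E3 → ℝ) : ℝ := ∫ v : E3, f v ^ 2 * jap v ^ (2 * q)

/-- weighted norm ‖f‖_{L²_q} -/
def wNorm (q : ℝ) (f : E3 → ℝ) : ℝ := Real.sqrt (wSqR q f)

/-- squared star norm ‖f‖²_{L²_{k+γ/2,*}} = ∫∫ μ(v*)|v-v*|^γ f(v)² ⟨v⟩^{2k} -/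
def starSq (γ k : ℝ) (f : E3 → ℝ) : ℝ :=
  ∫ v : E3, ∫ w : E3, maxw w * ‖v - w‖ ^ γ * f v ^ 2 * jap v ^ (2 * k)

/-- star norm ‖f‖_{L²_{k+γ/2,*}} -/
def starNorm (γ k : ℝ) (f : E3 → ℝ) : ℝ := Real.sqrt (starSq γ k f)

/-- squared exponentially weighted norm ‖f‖²_{L²_{q,a,b}} -/
def expSq (q a b : ℝ) (f : E3 → ℝ) : ℝ :=
  ∫ v : E3, f v ^ 2 * jap v ^ (2 * q) * Real.exp (2 * a * jap v ^ b)

/-- exponentially weighted norm ‖f‖_{L²_{q,a,b}} -/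
def expNorm (q a b : ℝ) (f : E3 → ℝ) : ℝ := Real.sqrt (expSq q a b f)

/-- squared weighted L² norm in ℝ≥0∞ (possibly infinite) -/
def wSq (q : ℝ) (f : E3 → ℝ) : ℝ≥0∞ := ∫⁻ v : E3, ENNReal.ofReal (f v ^ 2 * jap v ^ (2 * q))

/-- squared weighted first-order Sobolev norm ‖f‖²_{H¹_l} in ℝ≥0∞ -/
def h1Sq (l : ℝ) (f : E3 → ℝ) : ℝ≥0∞ :=
  ∫⁻ v : E3, ENNReal.ofReal ((f v ^ 2 + ‖fderiv ℝ f v‖ ^ 2) * jap v ^ (2 * l))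

/-! ### Weights -/

lemma one_le_jap (v : E3) : 1 ≤ jap v := by
  unfold jap
  rw [Real.one_le_sqrt]
  nlinarith [sq_nonneg ‖v‖]

lemma jap_sq (v : E3) : jap v ^ 2 = 1 + ‖v‖ ^ 2 := by
  unfold jap
  rw [Real.sq_sqrt (by positivity)]

lemma continuous_jap : Continuous jap := by
  unfold jap
  fun_prop

lemma jap_le_near {v w : E3} (h : ‖v - w‖ < 2) : jap v ≤ 4 * jap w * 1 := by
  have h1 : ‖v‖ ≤ ‖w‖ + ‖v - w‖ := by
    simpa using norm_add_le w (v - w)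
  refine (pow_le_pow_iff_left₀ (by linarith [one_le_jap v]) (by linarith [one_le_jap w])
    two_ne_zero).1 ?_
  have := jap_sq v
  have := jap_sq w
  nlinarith [norm_nonneg v, norm_nonneg w, norm_nonneg (v - w), sq_nonneg (‖w‖ - ‖v - w‖)]

lemma jap_le_far {v w : E3} (h : 1 ≤ ‖v - w‖) : jap v ≤ 4 * jap w * ‖v - w‖ := by
  have h1 : ‖v‖ ≤ ‖w‖ + ‖v - w‖ := by
    simpa using norm_add_le w (v - w)
  refine (pow_le_pow_iff_left₀ (by linarith [one_le_jap v])
    (by have := one_le_jap w; positivity) two_ne_zero).1 ?_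
  have h2 := jap_sq v
  have h3 := jap_sq w
  have h4 : 1 ≤ ‖v - w‖ ^ 2 := by nlinarith
  have h5 : ‖v‖ ^ 2 ≤ 2 * ‖w‖ ^ 2 + 2 * ‖v - w‖ ^ 2 := by
    nlinarith [norm_nonneg v, norm_nonneg w, norm_nonneg (v - w), sq_nonneg (‖w‖ - ‖v - w‖)]
  have h6 : ‖w‖ ^ 2 ≤ ‖w‖ ^ 2 * ‖v - w‖ ^ 2 := le_mul_of_one_le_right (by positivity) h4
  rw [h2, mul_pow, mul_pow, h3]
  nlinarith

/-- Peetre's inequality in multiplicative form, with the loss `Y ^ (-γ)` enlarged to `Y ^ 4`. -/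
lemma rpow_le_weight {γ X Y D : ℝ} (hγ1 : -2 < γ) (hγ2 : γ < 0) (hX : 0 < X) (hY : 1 ≤ Y)
    (hD : 0 < D) (h : X ≤ 4 * Y * D) : D ^ γ ≤ 16 * (X ^ γ * Y ^ (4 : ℝ)) := by
  have hY0 : 0 < Y := by linarith
  have h1 : (4 * Y * D) ^ γ ≤ X ^ γ := Real.rpow_le_rpow_of_nonpos hX h hγ2.le
  rw [Real.mul_rpow (by positivity) hD.le, Real.mul_rpow (by norm_num) hY0.le] at h1
  have h4 : (16 : ℝ)⁻¹ ≤ 4 ^ γ := by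
    have : (4 : ℝ) ^ (-2 : ℝ) ≤ 4 ^ γ := Real.rpow_le_rpow_of_exponent_le (by norm_num) hγ1.le
    rw [Real.rpow_neg (by norm_num)] at this
    norm_num at this ⊢
    exact this
  have hYY : 1 ≤ Y ^ γ * Y ^ (4 : ℝ) := by
    rw [← Real.rpow_add hY0]
    exact Real.one_le_rpow hY (by linarith)
  have hDγ : 0 < D ^ γ := Real.rpow_pos_of_pos hD _
  have hY4 : 0 < Y ^ (4 : ℝ) := Real.rpow_pos_of_pos hY0 _
  calc D ^ γ ≤ (16 * 4 ^ γ) * (Y ^ γ * Y ^ (4 : ℝ)) * D ^ γ := by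
        have : 1 ≤ (16 * (4 : ℝ) ^ γ) * (Y ^ γ * Y ^ (4 : ℝ)) := by
          apply one_le_mul_of_one_le_of_one_le _ hYY
          linarith
        exact le_mul_of_one_le_left hDγ.le this
    _ = 16 * ((4 ^ γ * Y ^ γ * D ^ γ) * Y ^ (4 : ℝ)) := by ring
    _ ≤ _ := by gcongr

/-! ### Local Hardy inequality -/

lemma lintegral_comp_smul_E3 {F : E3 → ℝ≥0∞} (hF : Measurable F) {r : ℝ} (hr : 0 < r) :
    ∫⁻ z, F (r • z) = ENNReal.ofReal ((r ^ 3)⁻¹) * ∫⁻ z, F z := by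
  have h1 : ∫⁻ z, F (r • z) = ∫⁻ y, F y ∂(Measure.map (r • ·) (volume : Measure E3)) :=
    (lintegral_map hF (measurable_const_smul r)).symm
  rw [h1, Measure.map_addHaar_smul _ hr.ne', lintegral_smul_measure, smul_eq_mul,
    finrank_euclideanSpace_fin, abs_of_pos (by positivity)]

lemma sq_integral_le {a : ℝ → ℝ} (ha : Continuous a) :
    (∫ t in (1 : ℝ)..2, a t) ^ 2 ≤ ∫ t in (1 : ℝ)..2, a t ^ 2 := by
  set m := ∫ t in (1 : ℝ)..2, a t with hm
  have h0 : 0 ≤ ∫ t in (1 : ℝ)..2, (a t - m) ^ 2 :=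
    intervalIntegral.integral_nonneg (by norm_num) fun t _ => sq_nonneg _
  have h1 : ∫ t in (1 : ℝ)..2, (a t - m) ^ 2
      = (∫ t in (1 : ℝ)..2, a t ^ 2) - 2 * m * m + m ^ 2 := by
    have e : ∀ t, (a t - m) ^ 2 = a t ^ 2 - 2 * m * a t + m ^ 2 := fun t => by ring
    simp_rw [e]
    rw [intervalIntegral.integral_add, intervalIntegral.integral_sub,
      intervalIntegral.integral_const_mul, ← hm]
    · simp
      ring
    all_goals exact Continuous.intervalIntegrable (by fun_prop) _ _
  nlinarith

/-- Comparison of `h z` with `h (2 z)` along the ray through `z`. -/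
lemma sq_le_dilate {h : E3 → ℝ} (hh : ContDiff ℝ 1 h) (z : E3) :
    h z ^ 2 ≤ 3 / 2 * h ((2 : ℝ) • z) ^ 2
      + 3 * ‖z‖ ^ 2 * ∫ t in (1 : ℝ)..2, ‖fderiv ℝ h (t • z)‖ ^ 2 := by
  have hc : Continuous (fderiv ℝ h) := hh.continuous_fderiv (by norm_num)
  have hd : ∀ t ∈ Set.uIcc (1 : ℝ) 2,
      HasDerivAt (fun t : ℝ => h (t • z)) (fderiv ℝ h (t • z) z) t := by
    intro t _
    have h1 : HasFDerivAt h (fderiv ℝ h (t • z)) (t • z) :=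
      (hh.differentiable (by norm_num) _).hasFDerivAt
    have h2 : HasDerivAt (fun t : ℝ => t • z) z t := by
      simpa using (hasDerivAt_id t).smul_const z
    exact h1.comp_hasDerivAt t h2
  have hcd : Continuous fun t : ℝ => fderiv ℝ h (t • z) z := by fun_prop
  have hcn : Continuous fun t : ℝ => ‖fderiv ℝ h (t • z)‖ := by fun_prop
  have hftc := intervalIntegral.integral_eq_sub_of_hasDerivAt hd (hcd.intervalIntegrable _ _)
  set D := ∫ t in (1 : ℝ)..2, fderiv ℝ h (t • z) z with hD
  have hDle : |D| ≤ ‖z‖ * ∫ t in (1 : ℝ)..2, ‖fderiv ℝ h (t • z)‖ := by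
    rw [← intervalIntegral.integral_const_mul]
    refine (intervalIntegral.abs_integral_le_integral_abs (by norm_num)).trans ?_
    refine intervalIntegral.integral_mono_on (by norm_num)
      (hcd.abs.intervalIntegrable _ _) ((hcn.const_mul _).intervalIntegrable _ _) fun t _ => ?_
    rw [mul_comm, ← Real.norm_eq_abs]
    exact ContinuousLinearMap.le_opNorm _ _
  have hDsq : D ^ 2 ≤ ‖z‖ ^ 2 * ∫ t in (1 : ℝ)..2, ‖fderiv ℝ h (t • z)‖ ^ 2 := by
    calc D ^ 2 = |D| ^ 2 := (sq_abs D).symm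
      _ ≤ (‖z‖ * ∫ t in (1 : ℝ)..2, ‖fderiv ℝ h (t • z)‖) ^ 2 := by gcongr
      _ = ‖z‖ ^ 2 * (∫ t in (1 : ℝ)..2, ‖fderiv ℝ h (t • z)‖) ^ 2 := by ring
      _ ≤ _ := by gcongr; exact sq_integral_le hcn
  simp only [one_smul] at hftc
  have hz : h z = h ((2 : ℝ) • z) - D := by linarith
  rw [hz]
  nlinarith [sq_nonneg (h ((2 : ℝ) • z) + 2 * D)]

/-- The averaged gradient term in `sq_le_dilate`, integrated over the unit ball. -/
lemma lintegral_grad_le {G : E3 → ℝ} (hG : Continuous G) :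
    ∫⁻ z in Metric.ball (0 : E3) 1, ∫⁻ t in Set.Ioc (1 : ℝ) 2, ENNReal.ofReal (G (t • z))
      ≤ ∫⁻ z in Metric.ball (0 : E3) 2, ENNReal.ofReal (G z) := by
  rw [lintegral_lintegral_swap (by
    apply Measurable.aemeasurable
    exact (Continuous.measurable (by fun_prop :
      Continuous fun p : E3 × ℝ => G (p.2 • p.1))).ennreal_ofReal)]
  set F : E3 → ℝ≥0∞ := (Metric.ball (0 : E3) 2).indicator fun z => ENNReal.ofReal (G z) with hF
  have hFm : Measurable F := by
    refine Measurable.indicator ?_ measurableSet_ball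
    fun_prop
  have hI : ∫⁻ z in Metric.ball (0 : E3) 2, ENNReal.ofReal (G z) = ∫⁻ z, F z :=
    (lintegral_indicator measurableSet_ball _).symm
  rw [hI]
  calc ∫⁻ t in Set.Ioc (1 : ℝ) 2, ∫⁻ z in Metric.ball (0 : E3) 1, ENNReal.ofReal (G (t • z))
      ≤ ∫⁻ t in Set.Ioc (1 : ℝ) 2, ∫⁻ z, F z := by
        refine setLIntegral_mono' measurableSet_Ioc fun t ht => ?_
        have ht0 : 0 < t := by linarith [ht.1]
        calc ∫⁻ z in Metric.ball (0 : E3) 1, ENNReal.ofReal (G (t • z))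
            ≤ ∫⁻ z in Metric.ball (0 : E3) 1, F (t • z) := by
              refine setLIntegral_mono' measurableSet_ball fun z hz => ?_
              have : t • z ∈ Metric.ball (0 : E3) 2 := by
                simp only [mem_ball_zero_iff] at hz ⊢
                rw [norm_smul, Real.norm_eq_abs, abs_of_pos ht0]
                nlinarith [ht.2, norm_nonneg z]
              rw [hF, Set.indicator_of_mem this]
          _ ≤ ∫⁻ z, F (t • z) := setLIntegral_le_lintegral _ _
          _ = ENNReal.ofReal ((t ^ 3)⁻¹) * ∫⁻ z, F z := lintegral_comp_smul_E3 hFm ht0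
          _ ≤ 1 * ∫⁻ z, F z := by
              gcongr
              rw [ENNReal.ofReal_le_one]
              exact inv_le_one_of_one_le₀ (one_le_pow₀ ht.1.le)
          _ = _ := one_mul _
    _ = ∫⁻ z, F z := by
        rw [setLIntegral_const, Real.volume_Ioc]
        norm_num

/-- `∫_{δ ≤ |z| < 1} |z| ^ γ h(2z)²` carries the contraction factor `1/2` under dilation. -/
lemma lintegral_dilate_le {γ : ℝ} (hγ1 : -2 < γ) (hγ2 : γ < 0) {h : E3 → ℝ}
    (hh : Continuous h) {δ : ℝ} (hδ : 0 < δ) :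
    ∫⁻ z in Metric.ball (0 : E3) 1 \ Metric.ball 0 δ,
        ENNReal.ofReal (‖z‖ ^ γ * h ((2 : ℝ) • z) ^ 2)
      ≤ ENNReal.ofReal (1 / 2) * ((∫⁻ z in Metric.ball (0 : E3) 1 \ Metric.ball 0 δ,
          ENNReal.ofReal (‖z‖ ^ γ * h z ^ 2))
        + ∫⁻ z in Metric.ball (0 : E3) 2, ENNReal.ofReal (h z ^ 2)) := by
  have hmA : MeasurableSet (Metric.ball (0 : E3) 1 \ Metric.ball 0 δ) :=
    measurableSet_ball.diff measurableSet_ball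
  have hmB : MeasurableSet (Metric.ball (0 : E3) 2 \ Metric.ball 0 δ) :=
    measurableSet_ball.diff measurableSet_ball
  have hm : Measurable fun z : E3 => ENNReal.ofReal (‖z‖ ^ γ * h z ^ 2) := by
    have := hh.measurable
    fun_prop
  set F : E3 → ℝ≥0∞ := (Metric.ball (0 : E3) 2 \ Metric.ball 0 δ).indicator
    fun z => ENNReal.ofReal (‖z‖ ^ γ * h z ^ 2) with hF
  have hFm : Measurable F := hm.indicator hmB
  have h2γ : (2 : ℝ) ^ (-γ) ≤ 4 := by
    calc (2 : ℝ) ^ (-γ) ≤ 2 ^ (2 : ℝ) :=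
          Real.rpow_le_rpow_of_exponent_le (by norm_num) (by linarith)
      _ = 4 := by norm_num
  calc ∫⁻ z in Metric.ball (0 : E3) 1 \ Metric.ball 0 δ,
        ENNReal.ofReal (‖z‖ ^ γ * h ((2 : ℝ) • z) ^ 2)
      ≤ ∫⁻ z in Metric.ball (0 : E3) 1 \ Metric.ball 0 δ, ENNReal.ofReal 4 * F ((2 : ℝ) • z) := by
        refine setLIntegral_mono' hmA fun z hz => ?_
        obtain ⟨hz1, hz2⟩ := hz
        simp only [mem_ball_zero_iff, not_lt] at hz1 hz2
        have hn : ‖(2 : ℝ) • z‖ = 2 * ‖z‖ := by simp [norm_smul]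
        have hmem : (2 : ℝ) • z ∈ Metric.ball (0 : E3) 2 \ Metric.ball 0 δ := by
          simp only [Set.mem_sdiff, mem_ball_zero_iff, not_lt, hn]
          constructor <;> linarith [norm_nonneg z]
        rw [hF, Set.indicator_of_mem hmem, ← ENNReal.ofReal_mul (by norm_num), ← mul_assoc, hn]
        apply ENNReal.ofReal_le_ofReal
        gcongr
        have h0 : 0 < ‖z‖ := by linarith
        rw [Real.mul_rpow (by norm_num) h0.le]
        have : (2 : ℝ) ^ (-γ) * 2 ^ γ = 1 := by
          rw [← Real.rpow_add (by norm_num)]; simp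
        have h2p : (0 : ℝ) < 2 ^ γ := by positivity
        have hzp : 0 ≤ ‖z‖ ^ γ := by positivity
        have : 1 ≤ 4 * (2 : ℝ) ^ γ := by nlinarith
        nlinarith
    _ ≤ ∫⁻ z, ENNReal.ofReal 4 * F ((2 : ℝ) • z) := setLIntegral_le_lintegral _ _
    _ = ENNReal.ofReal (1 / 2) * ∫⁻ z, F z := by
        rw [lintegral_const_mul' _ _ ENNReal.ofReal_ne_top,
          lintegral_comp_smul_E3 hFm (by norm_num), ← mul_assoc,
          ← ENNReal.ofReal_mul (by norm_num)]
        norm_num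
    _ ≤ _ := by
        gcongr
        rw [hF, lintegral_indicator hmB, ← lintegral_indicator hmB, ← lintegral_indicator hmA,
          ← lintegral_indicator measurableSet_ball, ← lintegral_add_left (hm.indicator hmA)]
        refine lintegral_mono fun z => ?_
        by_cases hz : z ∈ Metric.ball (0 : E3) 2 \ Metric.ball 0 δ
        · rw [Set.indicator_of_mem hz]
          by_cases hz1 : z ∈ Metric.ball (0 : E3) 1
          · have hz2 : z ∈ Metric.ball (0 : E3) 1 \ Metric.ball 0 δ := ⟨hz1, hz.2⟩
            rw [Set.indicator_of_mem hz2]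
            exact le_self_add
          · rw [Set.indicator_of_mem hz.1]
            refine le_trans ?_ le_add_self
            apply ENNReal.ofReal_le_ofReal
            simp only [mem_ball_zero_iff, not_lt] at hz1
            exact mul_le_of_le_one_left (sq_nonneg _)
              (Real.rpow_le_one_of_one_le_of_nonpos hz1 hγ2.le)
        · rw [Set.indicator_of_notMem hz]
          exact zero_le

/-- Local Hardy inequality, with a neighbourhood of the singularity removed. -/
lemma hardy_annulus {γ : ℝ} (hγ1 : -2 < γ) (hγ2 : γ < 0) {h : E3 → ℝ} (hh : ContDiff ℝ 1 h)
    {δ : ℝ} (hδ : 0 < δ) :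
    ∫⁻ z in Metric.ball (0 : E3) 1 \ Metric.ball 0 δ, ENNReal.ofReal (‖z‖ ^ γ * h z ^ 2)
      ≤ 12 * ∫⁻ z in Metric.ball (0 : E3) 2,
          ENNReal.ofReal (h z ^ 2 + ‖fderiv ℝ h z‖ ^ 2) := by
  have hc : Continuous (fderiv ℝ h) := hh.continuous_fderiv (by norm_num)
  have hhc : Continuous h := hh.continuous
  have hmA : MeasurableSet (Metric.ball (0 : E3) 1 \ Metric.ball 0 δ) :=
    measurableSet_ball.diff measurableSet_ball
  set N := ∫⁻ z in Metric.ball (0 : E3) 1 \ Metric.ball 0 δ,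
    ENNReal.ofReal (‖z‖ ^ γ * h z ^ 2) with hN
  set M0 := ∫⁻ z in Metric.ball (0 : E3) 2, ENNReal.ofReal (h z ^ 2) with hM0
  set M1 := ∫⁻ z in Metric.ball (0 : E3) 2, ENNReal.ofReal (‖fderiv ℝ h z‖ ^ 2) with hM1
  have hsum : ∫⁻ z in Metric.ball (0 : E3) 2,
      ENNReal.ofReal (h z ^ 2 + ‖fderiv ℝ h z‖ ^ 2) = M0 + M1 := by
    rw [hM0, hM1, ← lintegral_add_left (by fun_prop)]
    exact lintegral_congr fun z => ENNReal.ofReal_add (by positivity) (by positivity)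
  have hNfin : N < ⊤ := by
    have hK : IsCompact (Metric.closedBall (0 : E3) 1 \ Metric.ball 0 δ) :=
      (isCompact_closedBall _ _).diff Metric.isOpen_ball
    have hco : ContinuousOn (fun z : E3 => ‖z‖ ^ γ * h z ^ 2)
        (Metric.closedBall (0 : E3) 1 \ Metric.ball 0 δ) := by
      refine ContinuousOn.mul ?_ (by fun_prop)
      refine ContinuousOn.rpow_const (by fun_prop) fun z hz => Or.inl ?_
      have := hz.2
      simp only [mem_ball_zero_iff, not_lt] at this
      linarith
    have hint : IntegrableOn (fun z : E3 => ‖z‖ ^ γ * h z ^ 2)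
        (Metric.closedBall (0 : E3) 1 \ Metric.ball 0 δ) volume := hco.integrableOn_compact hK
    refine lt_of_le_of_lt ?_ (Integrable.lintegral_lt_top hint)
    exact lintegral_mono_set (Set.sdiff_subset_sdiff_left Metric.ball_subset_closedBall)
  have hstep : N ≤ ENNReal.ofReal (3 / 2) * (ENNReal.ofReal (1 / 2) * (N + M0))
      + ENNReal.ofReal 3 * M1 := by
    calc N ≤ ∫⁻ z in Metric.ball (0 : E3) 1 \ Metric.ball 0 δ,
          (ENNReal.ofReal (3 / 2) * ENNReal.ofReal (‖z‖ ^ γ * h ((2 : ℝ) • z) ^ 2)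
            + ENNReal.ofReal 3 * ∫⁻ t in Set.Ioc (1 : ℝ) 2,
                ENNReal.ofReal (‖fderiv ℝ h (t • z)‖ ^ 2)) := by
          refine setLIntegral_mono' hmA fun z hz => ?_
          obtain ⟨hz1, hz2⟩ := hz
          simp only [mem_ball_zero_iff, not_lt] at hz1 hz2
          have h0 : 0 < ‖z‖ := by linarith
          have hcn : Continuous fun t : ℝ => ‖fderiv ℝ h (t • z)‖ ^ 2 := by fun_prop
          have hint : ∫⁻ t in Set.Ioc (1 : ℝ) 2, ENNReal.ofReal (‖fderiv ℝ h (t • z)‖ ^ 2)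
              = ENNReal.ofReal (∫ t in (1 : ℝ)..2, ‖fderiv ℝ h (t • z)‖ ^ 2) := by
            rw [intervalIntegral.integral_of_le (by norm_num),
              ofReal_integral_eq_lintegral_ofReal]
            · exact (hcn.intervalIntegrable 1 2).1
            · exact Filter.Eventually.of_forall fun t => by positivity
          have hI : 0 ≤ ∫ t in (1 : ℝ)..2, ‖fderiv ℝ h (t • z)‖ ^ 2 :=
            intervalIntegral.integral_nonneg (by norm_num) fun t _ => by positivity
          rw [hint, ← ENNReal.ofReal_mul (by norm_num), ← ENNReal.ofReal_mul (by norm_num),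
            ← ENNReal.ofReal_add (by positivity) (by positivity)]
          apply ENNReal.ofReal_le_ofReal
          have hw : ‖z‖ ^ γ * ‖z‖ ^ 2 ≤ 1 := by
            rw [← Real.rpow_natCast, ← Real.rpow_add h0]
            exact Real.rpow_le_one h0.le hz1.le (by push_cast; linarith)
          have hzp : 0 ≤ ‖z‖ ^ γ := by positivity
          calc ‖z‖ ^ γ * h z ^ 2 ≤ ‖z‖ ^ γ * (3 / 2 * h ((2 : ℝ) • z) ^ 2
                + 3 * ‖z‖ ^ 2 * ∫ t in (1 : ℝ)..2, ‖fderiv ℝ h (t • z)‖ ^ 2) := by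
                gcongr; exact sq_le_dilate hh z
            _ = 3 / 2 * (‖z‖ ^ γ * h ((2 : ℝ) • z) ^ 2) + 3 * ((‖z‖ ^ γ * ‖z‖ ^ 2)
                * ∫ t in (1 : ℝ)..2, ‖fderiv ℝ h (t • z)‖ ^ 2) := by ring
            _ ≤ _ := by
                gcongr
                exact mul_le_of_le_one_left hI hw
      _ = ENNReal.ofReal (3 / 2) * (∫⁻ z in Metric.ball (0 : E3) 1 \ Metric.ball 0 δ,
            ENNReal.ofReal (‖z‖ ^ γ * h ((2 : ℝ) • z) ^ 2))
          + ENNReal.ofReal 3 * ∫⁻ z in Metric.ball (0 : E3) 1 \ Metric.ball 0 δ,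
              ∫⁻ t in Set.Ioc (1 : ℝ) 2, ENNReal.ofReal (‖fderiv ℝ h (t • z)‖ ^ 2) := by
          have hm1 : Measurable fun z : E3 =>
              ENNReal.ofReal (‖z‖ ^ γ * h ((2 : ℝ) • z) ^ 2) := by
            have h2 : Measurable fun z : E3 => h ((2 : ℝ) • z) :=
              Continuous.measurable (by fun_prop)
            fun_prop
          rw [lintegral_add_left (hm1.const_mul _), lintegral_const_mul _ hm1,
            lintegral_const_mul' _ _ ENNReal.ofReal_ne_top]
      _ ≤ _ := by
          gcongr
          · exact lintegral_dilate_le hγ1 hγ2 hhc hδ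
          · refine le_trans (lintegral_mono_set Set.sdiff_subset) ?_
            exact lintegral_grad_le (G := fun z => ‖fderiv ℝ h z‖ ^ 2) (by fun_prop)
  rw [hsum]
  by_cases hinf : M0 = ⊤ ∨ M1 = ⊤
  · rcases hinf with h' | h' <;> simp [h']
  · push Not at hinf
    clear_value M0 M1 N
    lift M0 to NNReal using hinf.1
    lift M1 to NNReal using hinf.2
    lift N to NNReal using hNfin.ne
    have e1 : ENNReal.ofReal (3 / 2) = ((3 / 2 : NNReal) : ℝ≥0∞) := by
      rw [ENNReal.ofReal]; congr 1; ext; norm_num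
    have e2 : ENNReal.ofReal (1 / 2) = ((1 / 2 : NNReal) : ℝ≥0∞) := by
      rw [ENNReal.ofReal]; congr 1; ext; norm_num
    have e3 : ENNReal.ofReal 3 = ((3 : NNReal) : ℝ≥0∞) := by
      rw [ENNReal.ofReal]; congr 1; ext; norm_num
    rw [e1, e2, e3] at hstep
    norm_cast at hstep ⊢
    rw [← NNReal.coe_le_coe] at hstep ⊢
    push_cast at hstep ⊢
    have := M0.coe_nonneg
    have := M1.coe_nonneg
    linarith

lemma hardy_local {γ : ℝ} (hγ1 : -2 < γ) (hγ2 : γ < 0) {h : E3 → ℝ} (hh : ContDiff ℝ 1 h) :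
    ∫⁻ z in Metric.ball (0 : E3) 1, ENNReal.ofReal (‖z‖ ^ γ * h z ^ 2)
      ≤ 12 * ∫⁻ z in Metric.ball (0 : E3) 2,
          ENNReal.ofReal (h z ^ 2 + ‖fderiv ℝ h z‖ ^ 2) := by
  have hU : Metric.ball (0 : E3) 1 \ {0}
      = ⋃ n : ℕ, Metric.ball (0 : E3) 1 \ Metric.ball 0 (1 / ((n : ℝ) + 1)) := by
    ext z
    simp only [Set.mem_sdiff, Set.mem_singleton_iff, Set.mem_iUnion, exists_and_left,
      mem_ball_zero_iff, not_lt]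
    refine and_congr_right fun _ => ⟨fun hz => ?_, ?_⟩
    · obtain ⟨n, hn⟩ := exists_nat_one_div_lt (norm_pos_iff.2 hz)
      exact ⟨n, hn.le⟩
    · rintro ⟨n, hn⟩ rfl
      have : (0 : ℝ) < 1 / ((n : ℝ) + 1) := by positivity
      simp only [norm_zero] at hn
      linarith
  have hdir : Directed (· ⊆ ·)
      fun n : ℕ => Metric.ball (0 : E3) 1 \ Metric.ball 0 (1 / ((n : ℝ) + 1)) := by
    refine Monotone.directed_le (f := fun n : ℕ =>
      Metric.ball (0 : E3) 1 \ Metric.ball 0 (1 / ((n : ℝ) + 1))) fun m n hmn => ?_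
    exact Set.sdiff_subset_sdiff_right
      (Metric.ball_subset_ball (Nat.one_div_le_one_div hmn))
  rw [← setLIntegral_congr (sdiff_null_ae_eq_self (measure_singleton (0 : E3))), hU,
    setLIntegral_iUnion_of_directed _ hdir]
  exact iSup_le fun n => hardy_annulus hγ1 hγ2 hh (by positivity)

/-! ### Potential estimate and integration against the second function -/

/-- Bound of the potential of `u ^ 2` by any weight `k` dominating both the constant `1` near `v`
and the kernel away from `v`. -/
lemma potential_le {γ : ℝ} (hγ1 : -2 < γ) (hγ2 : γ < 0) {u : E3 → ℝ} (hu : ContDiff ℝ 1 u)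
    (v : E3) {k : E3 → ℝ} (hk1 : ∀ w, ‖v - w‖ < 2 → 1 ≤ k w)
    (hk2 : ∀ w, 1 ≤ ‖v - w‖ → ‖v - w‖ ^ γ ≤ k w) :
    ∫⁻ w, ENNReal.ofReal (‖v - w‖ ^ γ * u w ^ 2)
      ≤ 13 * ∫⁻ w, ENNReal.ofReal ((u w ^ 2 + ‖fderiv ℝ u w‖ ^ 2) * k w) := by
  -- after the translation `w = v + z` the singularity sits at the origin
  rw [← lintegral_add_left_eq_self _ v,
    ← lintegral_add_left_eq_self (fun w => ENNReal.ofReal ((u w ^ 2 + ‖fderiv ℝ u w‖ ^ 2) * k w)) v]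
  have hn : ∀ z : E3, ‖v - (v + z)‖ = ‖z‖ := fun z => by simp
  simp_rw [hn]
  set J := ∫⁻ z, ENNReal.ofReal ((u (v + z) ^ 2 + ‖fderiv ℝ u (v + z)‖ ^ 2) * k (v + z)) with hJ
  rw [← lintegral_add_compl _ (measurableSet_ball (x := (0 : E3)) (ε := 1))]
  have hh : ContDiff ℝ 1 fun z => u (v + z) := hu.comp (contDiff_const.add contDiff_id)
  have hnear := hardy_local hγ1 hγ2 hh
  simp_rw [fderiv_comp_add_left] at hnear
  have h1 : ∫⁻ z in Metric.ball (0 : E3) 2,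
      ENNReal.ofReal (u (v + z) ^ 2 + ‖fderiv ℝ u (v + z)‖ ^ 2) ≤ J := by
    refine le_trans (setLIntegral_mono' measurableSet_ball fun z hz => ?_)
      (setLIntegral_le_lintegral (Metric.ball (0 : E3) 2) _)
    apply ENNReal.ofReal_le_ofReal
    refine le_mul_of_one_le_right (by positivity) (hk1 _ ?_)
    rw [hn]
    simpa using hz
  have h2 : ∫⁻ z in (Metric.ball (0 : E3) 1)ᶜ, ENNReal.ofReal (‖z‖ ^ γ * u (v + z) ^ 2) ≤ J := by
    refine le_trans (setLIntegral_mono' measurableSet_ball.compl fun z hz => ?_)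
      (setLIntegral_le_lintegral (Metric.ball (0 : E3) 1)ᶜ _)
    apply ENNReal.ofReal_le_ofReal
    have hz' : 1 ≤ ‖z‖ := by simpa using hz
    have hk : ‖z‖ ^ γ ≤ k (v + z) := by
      have := hk2 (v + z)
      rw [hn] at this
      exact this hz'
    rw [mul_comm (‖z‖ ^ γ)]
    have : 0 ≤ ‖z‖ ^ γ := by positivity
    have : u (v + z) ^ 2 ≤ u (v + z) ^ 2 + ‖fderiv ℝ u (v + z)‖ ^ 2 :=
      le_add_of_nonneg_right (by positivity)
    gcongr
  calc _ ≤ 12 * J + J := add_le_add (hnear.trans (by gcongr)) h2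
    _ = 13 * J := by ring

/-- The bound by a Sobolev norm of `f` and an `L²` norm of `g`, for abstract admissible weight
exponents `a`, `b`. -/
lemma double_le {γ a b : ℝ} (hγ1 : -2 < γ) (hγ2 : γ < 0)
    (hk : ∀ v w : E3, ∀ D : ℝ, 0 < D → jap v ≤ 4 * jap w * D → jap w ≤ 4 * jap v * D →
      D ^ γ ≤ 16 * (jap v ^ (2 * a) * jap w ^ (2 * b)))
    {f g : E3 → ℝ} (hf : ContDiff ℝ 1 f) (hg : ContDiff ℝ 1 g) :
    ∫⁻ v : E3, ∫⁻ w : E3, ENNReal.ofReal (‖v - w‖ ^ γ * f w ^ 2 * g v ^ 2)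
      ≤ ENNReal.ofReal 208 * h1Sq b f * wSq a g := by
  have hgc := hg.continuous
  have hfc := hf.continuous
  have hjp : ∀ v, 0 < jap v := fun v => by linarith [one_le_jap v]
  have hja : ∀ q : ℝ, Continuous fun v => jap v ^ q := fun q =>
    continuous_jap.rpow_const fun v => Or.inl (hjp v).ne'
  have hdf : Continuous (fderiv ℝ f) := hf.continuous_fderiv (by norm_num)
  have hm : Measurable fun w : E3 =>
      ENNReal.ofReal ((f w ^ 2 + ‖fderiv ℝ f w‖ ^ 2) * jap w ^ (2 * b)) := by
    have := hja (2 * b)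
    exact (Continuous.measurable (by fun_prop)).ennreal_ofReal
  have hinner : ∀ v : E3, ∫⁻ w : E3, ENNReal.ofReal (‖v - w‖ ^ γ * f w ^ 2 * g v ^ 2)
      ≤ ENNReal.ofReal 208 * h1Sq b f * ENNReal.ofReal (g v ^ 2 * jap v ^ (2 * a)) := by
    intro v
    have hp : 0 ≤ jap v ^ (2 * a) := (Real.rpow_pos_of_pos (hjp v) _).le
    have hP := potential_le hγ1 hγ2 hf v
      (k := fun w => 16 * (jap v ^ (2 * a) * jap w ^ (2 * b)))
      (fun w hw => by
        have := hk v w 1 one_pos (jap_le_near hw) (jap_le_near (by rwa [norm_sub_rev]))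
        simpa using this)
      (fun w hw => hk v w _ (by linarith) (jap_le_far hw)
        (by rw [norm_sub_rev]; exact jap_le_far (by rwa [norm_sub_rev])))
    have e1 : ∀ w : E3, ENNReal.ofReal (‖v - w‖ ^ γ * f w ^ 2 * g v ^ 2)
        = ENNReal.ofReal (‖v - w‖ ^ γ * f w ^ 2) * ENNReal.ofReal (g v ^ 2) := fun w =>
      ENNReal.ofReal_mul (by positivity)
    have e2 : ∀ w : E3, ENNReal.ofReal ((f w ^ 2 + ‖fderiv ℝ f w‖ ^ 2)
          * (16 * (jap v ^ (2 * a) * jap w ^ (2 * b))))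
        = ENNReal.ofReal (16 * jap v ^ (2 * a))
          * ENNReal.ofReal ((f w ^ 2 + ‖fderiv ℝ f w‖ ^ 2) * jap w ^ (2 * b)) := fun w => by
      rw [← ENNReal.ofReal_mul (by positivity)]
      congr 1
      ring
    simp_rw [e2] at hP
    rw [lintegral_const_mul _ hm] at hP
    simp_rw [e1]
    rw [lintegral_mul_const' _ _ ENNReal.ofReal_ne_top]
    calc _ ≤ 13 * (ENNReal.ofReal (16 * jap v ^ (2 * a)) * h1Sq b f)
          * ENNReal.ofReal (g v ^ 2) := by gcongr; exact hP
      _ = (13 * ENNReal.ofReal 16) * h1Sq b f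
          * (ENNReal.ofReal (g v ^ 2) * ENNReal.ofReal (jap v ^ (2 * a))) := by
          rw [ENNReal.ofReal_mul (by norm_num : (0 : ℝ) ≤ 16)]
          ring
      _ = _ := by
          rw [← ENNReal.ofReal_mul (by positivity)]
          norm_num
  refine (lintegral_mono hinner).trans ?_
  rw [lintegral_const_mul]
  · rfl
  · have := hja (2 * a)
    exact (Continuous.measurable (by fun_prop)).ennreal_ofReal

lemma double_swap (γ : ℝ) {f g : E3 → ℝ} (hf : Continuous f) (hg : Continuous g) :
    ∫⁻ v : E3, ∫⁻ w : E3, ENNReal.ofReal (‖v - w‖ ^ γ * f w ^ 2 * g v ^ 2)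
      = ∫⁻ v : E3, ∫⁻ w : E3, ENNReal.ofReal (‖v - w‖ ^ γ * g w ^ 2 * f v ^ 2) := by
  rw [lintegral_lintegral_swap]
  · refine lintegral_congr fun v => lintegral_congr fun w => ?_
    rw [norm_sub_rev]
    congr 1
    ring
  · apply Measurable.aemeasurable
    unfold Function.uncurry
    have := hf.measurable
    have := hg.measurable
    fun_prop

/-- four bounds for R = ∫∫ |v-v*|^γ f(v*)² g(v)² for γ ∈ (-2,0). -/
theorem stmt2 (γ : ℝ) (hγ1 : -2 < γ) (hγ2 : γ < 0) :
    ∃ C : ℝ, 0 < C ∧ ∀ f g : E3 → ℝ, ContDiff ℝ 1 f → ContDiff ℝ 1 g →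
      ((∫⁻ v : E3, ∫⁻ w : E3, ENNReal.ofReal (‖v - w‖ ^ γ * f w ^ 2 * g v ^ 2)) ≤
          ENNReal.ofReal C * h1Sq (γ / 2) f * wSq 2 g) ∧
      ((∫⁻ v : E3, ∫⁻ w : E3, ENNReal.ofReal (‖v - w‖ ^ γ * f w ^ 2 * g v ^ 2)) ≤
          ENNReal.ofReal C * wSq (γ / 2) f * h1Sq 2 g) ∧
      ((∫⁻ v : E3, ∫⁻ w : E3, ENNReal.ofReal (‖v - w‖ ^ γ * f w ^ 2 * g v ^ 2)) ≤
          ENNReal.ofReal C * h1Sq 2 f * wSq (γ / 2) g) ∧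
      ((∫⁻ v : E3, ∫⁻ w : E3, ENNReal.ofReal (‖v - w‖ ^ γ * f w ^ 2 * g v ^ 2)) ≤
          ENNReal.ofReal C * wSq 2 f * h1Sq (γ / 2) g) := by
  have hjp : ∀ v, 0 < jap v := fun v => by linarith [one_le_jap v]
  have e4 : (2 : ℝ) * 2 = 4 := by norm_num
  have eγ : 2 * (γ / 2) = γ := by ring
  have hA : ∀ f g : E3 → ℝ, ContDiff ℝ 1 f → ContDiff ℝ 1 g →
      ∫⁻ v : E3, ∫⁻ w : E3, ENNReal.ofReal (‖v - w‖ ^ γ * f w ^ 2 * g v ^ 2)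
        ≤ ENNReal.ofReal 208 * h1Sq (γ / 2) f * wSq 2 g := fun f g hf hg =>
    double_le hγ1 hγ2 (fun v w D hD _ h2 => by
      rw [e4, eγ, mul_comm (jap v ^ (4 : ℝ))]
      exact rpow_le_weight hγ1 hγ2 (hjp w) (one_le_jap v) hD h2) hf hg
  have hB : ∀ f g : E3 → ℝ, ContDiff ℝ 1 f → ContDiff ℝ 1 g →
      ∫⁻ v : E3, ∫⁻ w : E3, ENNReal.ofReal (‖v - w‖ ^ γ * f w ^ 2 * g v ^ 2)
        ≤ ENNReal.ofReal 208 * h1Sq 2 f * wSq (γ / 2) g := fun f g hf hg =>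
    double_le hγ1 hγ2 (fun v w D hD h1 _ => by
      rw [e4, eγ]
      exact rpow_le_weight hγ1 hγ2 (hjp v) (one_le_jap w) hD h1) hf hg
  refine ⟨208, by norm_num, fun f g hf hg => ⟨hA f g hf hg, ?_, hB f g hf hg, ?_⟩⟩
  · rw [double_swap γ hf.continuous hg.continuous, mul_right_comm]
    exact hB g f hg hf
  · rw [double_swap γ hf.continuous hg.continuous, mul_right_comm]
    exact hA g f hg hf

end
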